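/- arXiv:2510.16839 — 2 statements merged into one kernel-verified Lean document; each statement's English description precedes it below -/
import Mathlib

section
/- Let Ψ be a digraphon on a probability space (Ξ,ξ) whose minimum outdegree is positive, i.e., ess inf_{x∈Ξ} ∫_Ξ Ψ(x,y) dξ(y) > 0. Then there exists k ≥ 2 such that the directed k-cycle density satisfies t(C_k,Ψ) > 0. -/
open MeasureTheory Filter Set Topology
open scoped ENNReal Real

namespace Digraphon

variable {Ω : Type*} [MeasurableSpace Ω]

/-- `kpowAux μ Γ n` is the `(n+1)`-st kernel power of `Γ`. -/
noncomputable def kpowAux (μ : Measure Ω) (Γ : Ω → Ω → ℝ) : ℕ → Ω → Ω → ℝ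
  | 0 => Γ
  | n + 1 => fun x y => ∫ z, Γ x z * kpowAux μ Γ n z y ∂μ

/-- `dpow μ Γ k` is the `k`-th kernel power of `Γ` (intended for `k ≥ 1`). -/
noncomputable def dpow (μ : Measure Ω) (Γ : Ω → Ω → ℝ) (k : ℕ) : Ω → Ω → ℝ :=
  kpowAux μ Γ (k - 1)

noncomputable def kpowAuxC (μ : Measure Ω) (Γ : Ω → Ω → ℂ) : ℕ → Ω → Ω → ℂ
  | 0 => Γ
  | n + 1 => fun x y => ∫ z, Γ x z * kpowAuxC μ Γ n z y ∂μ

noncomputable def dpowC (μ : Measure Ω) (Γ : Ω → Ω → ℂ) (k : ℕ) : Ω → Ω → ℂ :=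
  kpowAuxC μ Γ (k - 1)

/-- The set of points reachable from `x`. -/
def ReachOut (μ : Measure Ω) (Γ : Ω → Ω → ℝ) (x : Ω) : Set Ω :=
  {z | ∃ k : ℕ, 1 ≤ k ∧ 0 < dpow μ Γ k x z}

/-- The reachability sequence from `x` to `y`. -/
def reachSeq (μ : Measure Ω) (Γ : Ω → Ω → ℝ) (x y : Ω) : Set ℕ :=
  {k : ℕ | 1 ≤ k ∧ 0 < dpow μ Γ k x y}

/-- A digraphon: a measurable kernel with values in `[0,1]`. -/
def IsDigraphon (Γ : Ω → Ω → ℝ) : Prop :=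
  Measurable (Function.uncurry Γ) ∧ ∀ x y, Γ x y ∈ Set.Icc (0 : ℝ) 1

/-- `X` is strongly connected in `Γ`. -/
def StronglyConnectedIn (μ : Measure Ω) (Γ : Ω → Ω → ℝ) (X : Set Ω) : Prop :=
  MeasurableSet X ∧ 0 < μ X ∧
    ∀ A B : Set Ω, MeasurableSet A → MeasurableSet B → A ∪ B = X → Disjoint A B →
      0 < μ A → 0 < μ B → 0 < ∫ x in A, ∫ y in B, Γ x y ∂μ ∂μ

/-- `X` is a strong component in `Γ`. -/
def StrongComponent (μ : Measure Ω) (Γ : Ω → Ω → ℝ) (X : Set Ω) : Prop :=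
  StronglyConnectedIn μ Γ X ∧
    ∀ Y : Set Ω, MeasurableSet Y → 0 < μ (X ∩ Y) → 0 < μ (Y \ X) →
      ¬ StronglyConnectedIn μ Γ Y

/-- `X` is fragmented in `Γ`. -/
def Fragmented (μ : Measure Ω) (Γ : Ω → Ω → ℝ) (X : Set Ω) : Prop :=
  ∀ Y : Set Ω, Y ⊆ X → MeasurableSet Y → ¬ StronglyConnectedIn μ Γ Y

/-- `τ` is an eigenvalue of the integral kernel operator of `Γ` on `L²(Ω;ℂ)`. -/
def IsEigenvalue (μ : Measure Ω) (Γ : Ω → Ω → ℝ) (τ : ℂ) : Prop :=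
  ∃ f : Ω → ℂ, MemLp f 2 μ ∧ ¬(f =ᵐ[μ] 0) ∧
    ∀ᵐ x ∂μ, ∫ y, f y * (Γ y x : ℂ) ∂μ = τ * f x

/-- The spectral radius of `Γ` (`0` if there are no eigenvalues). -/
noncomputable def specRad (μ : Measure Ω) (Γ : Ω → Ω → ℝ) : ℝ :=
  sSup (insert 0 {r : ℝ | ∃ τ : ℂ, IsEigenvalue μ Γ τ ∧ ‖τ‖ = r})

/-- The number of eigenvalues of modulus `specRad μ Γ`. -/
noncomputable def periphMult (μ : Measure Ω) (Γ : Ω → Ω → ℝ) : ℕ :=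
  {τ : ℂ | IsEigenvalue μ Γ τ ∧ ‖τ‖ = specRad μ Γ}.ncard

/-- `P : ZMod d → Set Ω` witnesses graphical `d`-periodicity of `Γ`. -/
def IsPeriodicityWitness (μ : Measure Ω) (Γ : Ω → Ω → ℝ) {d : ℕ} (P : ZMod d → Set Ω) : Prop :=
  (∀ j, MeasurableSet (P j)) ∧ Pairwise (Function.onFun Disjoint P) ∧ (⋃ j, P j) = Set.univ ∧
    ∀ j : ZMod d, (μ.prod μ) {p : Ω × Ω | p.1 ∈ P j ∧ p.2 ∉ P (j + 1) ∧ Γ p.1 p.2 ≠ 0} = 0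

/-- `Γ` is graphically `d`-periodic. -/
def GraphPeriodic (μ : Measure Ω) (Γ : Ω → Ω → ℝ) (d : ℕ) : Prop :=
  ∃ P : ZMod d → Set Ω, IsPeriodicityWitness μ Γ P

/-- `Γ` is aperiodic. -/
def Aperiodic (μ : Measure Ω) (Γ : Ω → Ω → ℝ) : Prop :=
  ∀ d : ℕ, 1 ≤ d → GraphPeriodic μ Γ d → d = 1

/-- `S ⊆ ℕ` is eventually `D`-periodic with shift `s`. -/
def EvPeriodic (D : ℕ) (s : ℤ) (S : Set ℕ) : Prop :=
  (∀ n ∈ S, (D : ℤ) ∣ ((n : ℤ) - s)) ∧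
    ∃ k : ℕ, ∀ n : ℕ, k ≤ n → (((D : ℤ) ∣ ((n : ℤ) - s)) ↔ n ∈ S)

/-- The homomorphism density `t(C_k, Γ)` of the directed `k`-cycle. -/
noncomputable def cycleDensity (μ : Measure Ω) (Γ : Ω → Ω → ℝ) (k : ℕ) : ℝ :=
  ∫ x : Fin k → Ω, ∏ i : Fin k, Γ (x i) (x (finRotate k i)) ∂(Measure.pi fun _ => μ)

/-- `Γ⟦A⟧` : the kernel equal to `Γ` on `A × A` and `0` elsewhere. -/
noncomputable def kerRestrict (Γ : Ω → Ω → ℝ) (A : Set Ω) : Ω → Ω → ℝ :=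
  fun x y => (A ×ˢ A).indicator (Function.uncurry Γ) (x, y)

/-- Equality of sets modulo a `μ`-nullset. -/
def AEEqSet (μ : Measure Ω) (A B : Set Ω) : Prop := μ ((A \ B) ∪ (B \ A)) = 0

/-- The normalized restriction of `μ` to `A`, as a measure on `↥A`. -/
noncomputable def subMeasure (μ : Measure Ω) (A : Set Ω) : Measure ↥A :=
  (μ A)⁻¹ • Measure.comap Subtype.val μ

/-- The restriction of a kernel to `A × A`, as a kernel on `↥A`. -/
def subKernel (Γ : Ω → Ω → ℝ) (A : Set Ω) : ↥A → ↥A → ℝ :=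
  fun a b => Γ ↑a ↑b

/-- A finite oriented graph: no pair of antiparallel edges (in particular no loops). -/
structure OrientedGraph where
  n : ℕ
  E : Finset (Fin n × Fin n)
  no_anti : ∀ e ∈ E, (e.2, e.1) ∉ E

/-- The homomorphism density `t(D, Γ)` of an oriented graph `D`. -/
noncomputable def homDensity (μ : Measure Ω) (Γ : Ω → Ω → ℝ) (D : OrientedGraph) : ℝ :=
  ∫ x : Fin D.n → Ω, ∏ e ∈ D.E, Γ (x e.1) (x e.2) ∂(Measure.pi fun _ => μ)

/-- The cut norm distance of two kernels. -/
noncomputable def cutNormDist (μ : Measure Ω) (U W : Ω → Ω → ℝ) : ℝ :=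
  sSup {r : ℝ | ∃ S T : Set Ω, MeasurableSet S ∧ MeasurableSet T ∧
    r = |∫ x in S, ∫ y in T, (U x y - W x y) ∂μ ∂μ|}

/-- The cut distance of two kernels. -/
noncomputable def cutDist (μ : Measure Ω) (U W : Ω → Ω → ℝ) : ℝ :=
  sInf {r : ℝ | ∃ e : Ω ≃ᵐ Ω, MeasurePreserving e μ μ ∧
    r = cutNormDist μ U (fun x y => W (e x) (e y))}


/-!
In a sample of `m + 1` independent points, a given point has no out-neighbour among the other `m`
with probability at most `(1 - δ) ^ m`, where `δ` is the minimum outdegree. For `m` large,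
`(m + 1) * (1 - δ) ^ m < 1`, so with positive probability every sampled point has an out-neighbour
among the others, and following out-neighbours in this finite digraph one runs into a directed
cycle. If all cycle densities vanished, almost every sample would be acyclic.
-/

/-- The closed walks of length `k` in the digraph `R`, recorded by their successive vertices:
homomorphic images of the directed `k`-cycle, vertices may repeat. -/
def closedWalks {V : Type*} (R : V → V → Prop) (k : ℕ) : Set (Fin k → V) :=
  {x | ∀ i, R (x i) (x (finRotate k i))}

section Finite

variable {V : Type*} [Finite V] [Nonempty V]

theorem nonempty_periodicPts_of_finite (g : V → V) : (Function.periodicPts g).Nonempty := by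
  obtain ⟨m, n, hmn, heq⟩ := Finite.exists_ne_map_eq_of_infinite
    fun n : ℕ => g^[n] (Classical.arbitrary V)
  wlog hlt : m < n generalizing m n
  · exact this n m hmn.symm heq.symm (by omega)
  refine ⟨g^[m] (Classical.arbitrary V), n - m, by omega, ?_⟩
  rw [Function.IsPeriodicPt, Function.IsFixedPt, ← Function.iterate_add_apply,
    Nat.sub_add_cancel hlt.le]
  exact heq.symm

theorem exists_injective_mem_closedWalks {R : V → V → Prop} (hR : ∀ a, ∃ b ≠ a, R a b) :
    ∃ k, 2 ≤ k ∧ ∃ f ∈ closedWalks R k, Function.Injective f := by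
  choose g hne hRg using hR
  obtain ⟨p, hp⟩ := nonempty_periodicPts_of_finite g
  have hpos := Function.minimalPeriod_pos_of_mem_periodicPts hp
  have hone : Function.minimalPeriod g p ≠ 1 :=
    fun h => hne p (Function.minimalPeriod_eq_one_iff_isFixedPt.1 h)
  refine ⟨Function.minimalPeriod g p, by omega, fun i => g^[i] p, fun i => ?_, fun a b hab => ?_⟩
  · have hsucc : g^[finRotate _ i] p = g (g^[i] p) := by
      rw [← Function.iterate_succ_apply' g, ← Function.iterate_mod_minimalPeriod_eq (n := i + 1)]
      simp [finRotate_apply, Fin.val_add]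
    simpa only [hsucc] using hRg (g^[i] p)
  · exact Fin.ext (Function.iterate_injOn_Iio_minimalPeriod a.2 b.2 hab)

end Finite

theorem measurePreserving_pi_comp_of_injective {ι κ : Type*} [Fintype ι] [Fintype κ]
    {X : κ → Type*} [∀ j, MeasurableSpace (X j)] (μ : ∀ j, Measure (X j))
    [∀ j, IsProbabilityMeasure (μ j)] {f : ι → κ} (hf : Function.Injective f) :
    MeasurePreserving (fun (x : ∀ j, X j) i => x (f i))
      (Measure.pi μ) (Measure.pi fun i => μ (f i)) := by
  have hindep := (ProbabilityTheory.iIndepFun_pi (μ := μ) (X := fun _ => id)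
    fun _ => aemeasurable_id).precomp hf
  refine ⟨by fun_prop, ?_⟩
  simpa only [id_eq, (measurePreserving_eval μ _).map_eq] using hindep.map_fun_eq_pi_map
    fun i => (measurable_pi_apply (f i)).aemeasurable

theorem exists_nat_add_one_mul_pow_lt_one {c : ℝ≥0∞} (hc : c < 1) :
    ∃ m : ℕ, (m + 1) * c ^ m < 1 := by
  lift c to NNReal using hc.ne_top
  have hc' : (c : ℝ) < 1 := by exact_mod_cast hc
  have hlim : Tendsto (fun m : ℕ => (m + 1 : ℝ) * (c : ℝ) ^ m) atTop (𝓝 0) := by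
    simpa only [add_mul, one_mul, add_zero] using
      (tendsto_self_mul_const_pow_of_lt_one c.coe_nonneg hc').add
        (tendsto_pow_atTop_nhds_zero_of_lt_one c.coe_nonneg hc')
  obtain ⟨m, hm⟩ := (hlim.eventually (gt_mem_nhds one_pos)).exists
  exact ⟨m, by exact_mod_cast hm⟩

section RandomSample

variable {μ : Measure Ω} [IsProbabilityMeasure μ] {R : Ω → Ω → Prop} {c : ℝ≥0∞}

theorem measure_pi_forall_not_rel_succAbove_le (hR : MeasurableSet {p : Ω × Ω | R p.1 p.2})
    (hc : ∀ᵐ a ∂μ, μ {b | ¬ R a b} ≤ c) {m : ℕ} (i : Fin (m + 1)) :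
    Measure.pi (fun _ : Fin (m + 1) => μ) {x | ∀ j, ¬ R (x i) (x (i.succAbove j))} ≤ c ^ m := by
  let S : Set (Ω × (Fin m → Ω)) := {q | ∀ j, ¬ R q.1 (q.2 j)}
  have hS : MeasurableSet S := by
    simp only [S, Set.ofPred_forall]
    exact .iInter fun j =>
      hR.compl.preimage (f := fun q : Ω × (Fin m → Ω) => (q.1, q.2 j)) (by fun_prop)
  have hslice (a : Ω) : Prod.mk a ⁻¹' S = Set.univ.pi fun _ => {b | ¬ R a b} := by
    ext y; simp [S]
  calc Measure.pi (fun _ => μ) {x | ∀ j, ¬ R (x i) (x (i.succAbove j))}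
      = (μ.prod (Measure.pi fun _ => μ)) S :=
        (measurePreserving_piFinSuccAbove (fun _ => μ) i).measure_preimage hS.nullMeasurableSet
    _ = ∫⁻ a, μ {b | ¬ R a b} ^ m ∂μ := by
        simp only [Measure.prod_apply hS, hslice, Measure.pi_pi, Finset.prod_const,
          Finset.card_univ, Fintype.card_fin]
    _ ≤ ∫⁻ _, c ^ m ∂μ := lintegral_mono_ae (hc.mono fun _ h => pow_le_pow_left' h m)
    _ = c ^ m := by simp

theorem measure_pi_exists_forall_not_rel_succAbove_le
    (hR : MeasurableSet {p : Ω × Ω | R p.1 p.2}) (hc : ∀ᵐ a ∂μ, μ {b | ¬ R a b} ≤ c) (m : ℕ) :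
    Measure.pi (fun _ : Fin (m + 1) => μ) {x | ∃ i, ∀ j, ¬ R (x i) (x (i.succAbove j))} ≤
      (m + 1) * c ^ m := by
  rw [Set.ofPred_exists]
  calc _ ≤ ∑ i, Measure.pi (fun _ : Fin (m + 1) => μ)
          {x | ∀ j, ¬ R (x i) (x (i.succAbove j))} := measure_iUnion_fintype_le _ _
    _ ≤ ∑ _ : Fin (m + 1), c ^ m :=
        Finset.sum_le_sum fun i _ => measure_pi_forall_not_rel_succAbove_le hR hc i
    _ = (m + 1) * c ^ m := by simp

theorem ae_comp_notMem_closedWalks {ι : Type*} [Fintype ι]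
    (h : ∀ k, 2 ≤ k → Measure.pi (fun _ : Fin k => μ) (closedWalks R k) = 0) :
    ∀ᵐ x ∂Measure.pi fun _ : ι => μ, ∀ k, 2 ≤ k → ∀ f : Fin k → ι, Function.Injective f →
      x ∘ f ∉ closedWalks R k := by
  simp only [ae_all_iff]
  intro k hk f hf
  exact (measurePreserving_pi_comp_of_injective (fun _ => μ) hf).quasiMeasurePreserving.ae
    (measure_eq_zero_iff_ae_notMem.1 (h k hk))

theorem exists_measure_closedWalks_pos (hR : MeasurableSet {p : Ω × Ω | R p.1 p.2})
    (hdeg : 0 < essInf (fun a => μ {b | R a b}) μ) :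
    ∃ k, 2 ≤ k ∧ 0 < Measure.pi (fun _ : Fin k => μ) (closedWalks R k) := by
  set δ := essInf (fun a => μ {b | R a b}) μ
  have hc : ∀ᵐ a ∂μ, μ {b | ¬ R a b} ≤ 1 - δ := by
    filter_upwards [ae_essInf_le (f := fun a => μ {b | R a b})] with a ha
    exact (prob_compl_eq_one_sub (measurable_prodMk_left hR)).trans_le (tsub_le_tsub_left ha 1)
  obtain ⟨m, hm⟩ := exists_nat_add_one_mul_pow_lt_one
    (ENNReal.sub_lt_self ENNReal.one_ne_top one_ne_zero hdeg.ne')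
  by_contra! hnull
  have hacyclic := ae_comp_notMem_closedWalks (ι := Fin (m + 1)) (μ := μ) (R := R)
    fun k hk => nonpos_iff_eq_zero.1 (hnull k hk)
  have hsink : ∀ᵐ x ∂Measure.pi fun _ : Fin (m + 1) => μ,
      ∃ i, ∀ j, ¬ R (x i) (x (i.succAbove j)) := by
    filter_upwards [hacyclic] with x hx
    by_contra! hout
    obtain ⟨k, hk, f, hf, hinj⟩ := exists_injective_mem_closedWalks
      (R := fun i j => R (x i) (x j)) fun i =>
        let ⟨j, hj⟩ := hout i
        ⟨i.succAbove j, i.succAbove_ne j, hj⟩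
    exact hx k hk f hinj hf
  refine ((measure_pi_exists_forall_not_rel_succAbove_le hR hc m).trans_lt hm).ne ?_
  exact (measure_congr (eventuallyEq_univ.2 hsink)).trans measure_univ

end RandomSample

namespace IsDigraphon

variable {μ : Measure Ω} {Γ : Ω → Ω → ℝ}

theorem measurableSet_setOf_pos (hΓ : IsDigraphon Γ) :
    MeasurableSet {p : Ω × Ω | 0 < Γ p.1 p.2} :=
  measurableSet_lt measurable_const hΓ.1

theorem cycleDensity_pos_iff [IsFiniteMeasure μ] (hΓ : IsDigraphon Γ) (k : ℕ) :
    0 < cycleDensity μ Γ k ↔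
      0 < Measure.pi (fun _ : Fin k => μ) (closedWalks (fun a b => 0 < Γ a b) k) := by
  let w : (Fin k → Ω) → ℝ := fun x => ∏ i, Γ (x i) (x (finRotate k i))
  have hw0 : 0 ≤ w := fun x => Finset.prod_nonneg fun i _ => (hΓ.2 _ _).1
  have hw1 (x) : w x ≤ 1 := Finset.prod_le_one (fun i _ => (hΓ.2 _ _).1) fun i _ => (hΓ.2 _ _).2
  have hwm : Measurable w := Finset.measurable_prod _ fun i _ =>
    hΓ.1.comp (f := fun x : Fin k → Ω => (x i, x (finRotate k i))) (by fun_prop)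
  have hint : Integrable w (Measure.pi fun _ => μ) :=
    .of_bound hwm.aestronglyMeasurable 1 <| .of_forall fun x =>
      (Real.norm_of_nonneg (hw0 x)).trans_le (hw1 x)
  have hsupp : Function.support w = closedWalks (fun a b => 0 < Γ a b) k := by
    ext x
    simp only [w, closedWalks, Function.mem_support, Finset.prod_ne_zero_iff, Finset.mem_univ,
      forall_const, Set.mem_ofPred_eq, (hΓ.2 _ _).1.lt_iff_ne']
  rw [← hsupp]
  exact integral_pos_iff_support_of_nonneg hw0 hint

theorem ofReal_essInf_integral_le (hΓ : IsDigraphon Γ) :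
    ENNReal.ofReal (essInf (fun x => ∫ y, Γ x y ∂μ) μ) ≤
      essInf (fun x => μ {y | 0 < Γ x y}) μ := by
  have hbdd : IsBoundedUnder (· ≥ ·) (ae μ) fun x => ∫ y, Γ x y ∂μ :=
    isBoundedUnder_of ⟨0, fun x => integral_nonneg fun y => (hΓ.2 x y).1⟩
  refine le_essInf_of_ae_le _ ?_
  filter_upwards [ae_essInf_le hbdd] with x hx
  calc ENNReal.ofReal (essInf (fun x => ∫ y, Γ x y ∂μ) μ)
      ≤ ENNReal.ofReal (∫ y, Γ x y ∂μ) := ENNReal.ofReal_le_ofReal hx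
    _ ≤ μ {y | 0 < Γ x y} :=
        integral_le_measure (fun y _ => (hΓ.2 x y).2) fun y hy => not_lt.1 hy

end IsDigraphon

/-- A qualitative Caccetta–Häggkvist statement for digraphons: positive
minimum outdegree forces a directed cycle of positive density. -/
theorem caccetta_haggkvist_qualitative
    {Ξ : Type*} [MeasurableSpace Ξ] (ξ : Measure Ξ) [IsProbabilityMeasure ξ]
    (Ψ : Ξ → Ξ → ℝ) (hΨ : IsDigraphon Ψ)
    (hdeg : 0 < essInf (fun x => ∫ y, Ψ x y ∂ξ) ξ) :
    ∃ k : ℕ, 2 ≤ k ∧ 0 < cycleDensity ξ Ψ k := by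
  have hsupp : 0 < essInf (fun x => ξ {y | 0 < Ψ x y}) ξ :=
    (ENNReal.ofReal_pos.2 hdeg).trans_le hΨ.ofReal_essInf_integral_le
  obtain ⟨k, hk, hpos⟩ := exists_measure_closedWalks_pos hΨ.measurableSet_setOf_pos hsupp
  exact ⟨k, hk, (hΨ.cycleDensity_pos_iff k).2 hpos⟩

end Digraphon
end

section
/- Let Γ be a digraphon on a probability space (Ω,μ) and let Ω = X₀ ⊔ ⨆_{i∈I} X_i be its decomposition into strong components X_i (i ∈ I) and a fragmented (or null) set X₀. Then for every integer k ≥ 2, t(C_k,Γ) = ∑_{i∈I} t(C_k, Γ⟦X_i⟧). -/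
open MeasureTheory Filter Set Topology
open scoped ENNReal Real

namespace Digraphon

variable {Ω : Type*} [MeasurableSpace Ω]

/-!
Call `y` reachable from `x` if the two are joined by a walk of positive weight whose intermediate
vertices range over sets of positive measure. Reachability is transitive through almost every
midpoint, so for almost every `x` the class of vertices mutually reachable with `x` is null or
strongly connected. In the latter case it lies, up to a null set, in one strong component: a
component cannot be enlarged, and the fragmented remainder contains no strongly connected set.
Hence almost every pair of mutually reachable vertices lies in a common component. The vertices of
a directed cycle of positive weight are mutually reachable, so almost every such cycle stays inside
one component, and the integral defining the cycle density splits along the components.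
-/

section MeasureLemmas

variable {α β : Type*} [MeasurableSpace α] [MeasurableSpace β] {μ : Measure α} {ν : Measure β}

lemma measurable_ae [SFinite ν] {p : α → β → Prop} (hp : Measurable (Function.uncurry p)) :
    Measurable fun x => ∀ᵐ y ∂ν, p x y :=
  measurableSet_setOfPred.1 <|
    measurable_measure_prodMk_left hp.not.setOf (measurableSet_singleton 0)

lemma measurable_frequently_ae [SFinite ν] {p : α → β → Prop}
    (hp : Measurable (Function.uncurry p)) : Measurable fun x => ∃ᵐ y ∂ν, p x y :=
  (measurable_ae (p := fun x y => ¬p x y) hp.not).not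

lemma frequently_ae_frequently_ae_comm [SFinite μ] [SFinite ν] {p : α → β → Prop}
    (hp : Measurable (Function.uncurry p)) :
    (∃ᵐ x ∂μ, ∃ᵐ y ∂ν, p x y) ↔ ∃ᵐ y ∂ν, ∃ᵐ x ∂μ, p x y := by
  simpa only [Filter.Frequently, not_not] using
    not_congr (Measure.ae_ae_comm (p := fun x y => ¬p x y) hp.not.setOf)

lemma integral_integral_pos_of_frequently_ne_zero [SFinite μ] [SFinite ν] {f : α → β → ℝ}
    (hf : ∀ x y, 0 ≤ f x y) (hfi : Integrable (Function.uncurry f) (μ.prod ν))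
    (h : ∃ᵐ x ∂μ, ∃ᵐ y ∂ν, f x y ≠ 0) : 0 < ∫ x, ∫ y, f x y ∂ν ∂μ := by
  refine (integral_nonneg fun x => integral_nonneg (hf x)).lt_of_ne' fun hzero => h ?_
  have hprod : Function.uncurry f =ᵐ[μ.prod ν] 0 :=
    (integral_eq_zero_iff_of_nonneg (f := Function.uncurry f) (fun q => hf q.1 q.2) hfi).1
      ((integral_prod _ hfi).trans hzero)
  filter_upwards [Measure.ae_ae_of_ae_prod hprod] with x hx
  exact not_frequently.2 (hx.mono fun y hy => not_not.2 hy)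

end MeasureLemmas

section ProductMeasure

variable {κ : Type*} [Fintype κ] {α : κ → Type*} [∀ i, MeasurableSpace (α i)]
  {μ : ∀ i, Measure (α i)} [∀ i, SigmaFinite (μ i)]

lemma ae_pi_of_forall_ae_update [DecidableEq κ] {p : (∀ i, α i) → Prop} (hp : Measurable p) (j : κ)
    (h : ∀ x, ∀ᵐ y ∂μ j, p (Function.update x j y)) : ∀ᵐ x ∂Measure.pi μ, p x := by
  have hbad : MeasurableSet {x | ¬p x} := hp.not.setOf
  have hmarginal : ∫⋯∫⁻_{j}, {x | ¬p x}.indicator 1 ∂μ = ∫⋯∫⁻_{j}, 0 ∂μ := by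
    ext x
    simp only [lmarginal_singleton]
    refine lintegral_congr_ae ((h x).mono fun y hy => ?_)
    simp [hy]
  have hnull := lintegral_eq_of_lmarginal_eq {j} (measurable_one.indicator hbad) measurable_zero
    hmarginal
  simpa [ae_iff, lintegral_indicator_one hbad] using hnull

lemma ae_pi_of_ae_ae {i j : κ} (hij : i ≠ j) {p : α i → α j → Prop}
    (hp : Measurable (Function.uncurry p)) (h : ∀ᵐ a ∂μ i, ∀ᵐ b ∂μ j, p a b) :
    ∀ᵐ x ∂Measure.pi μ, p (x i) (x j) := by
  classical
  have hfst : ∀ᵐ x ∂Measure.pi μ, ∀ᵐ b ∂μ j, p (x i) b :=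
    (Measure.quasiMeasurePreserving_eval μ i).ae h
  have hsnd : ∀ᵐ x ∂Measure.pi μ, (∀ᵐ b ∂μ j, p (x i) b) → p (x i) (x j) := by
    refine ae_pi_of_forall_ae_update ?_ j fun x => ?_
    · exact ((measurable_ae hp).comp (measurable_pi_apply i)).imp
        (hp.comp ((measurable_pi_apply i).prodMk (measurable_pi_apply j)))
    · simp only [Function.update_self, Function.update_of_ne hij]
      exact eventually_imp_distrib_left.2 id
  filter_upwards [hfst, hsnd] with x hx himp using himp hx

end ProductMeasure

section AETransitive

variable {μ : Measure Ω} {R : Ω → Ω → Prop}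

/-- Transitivity of a relation through almost every midpoint. The endpoints are arbitrary, so that
this can be used with the endpoints fixed or under any measure on them. -/
def AETransitive (μ : Measure Ω) (R : Ω → Ω → Prop) : Prop :=
  ∀ x z, ∀ᵐ y ∂μ, R x y → R y z → R x z

lemma AETransitive.and_swap (h : AETransitive μ R) :
    AETransitive μ fun x y => R x y ∧ R y x := by
  intro x z
  filter_upwards [h x z, h z x] with y hxz hzx hxy hyz
  exact ⟨hxz hxy.1 hyz.1, hzx hyz.2 hxy.2⟩

lemma AETransitive.ae_ae [SFinite μ] (h : AETransitive μ R) (hR : Measurable (Function.uncurry R))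
    (x : Ω) : ∀ᵐ y ∂μ, ∀ᵐ z ∂μ, R x y → R y z → R x z := by
  refine (Measure.ae_ae_comm (p := fun z y => R x y → R y z → R x z) (Measurable.setOf ?_)).1
    (Eventually.of_forall fun z => h x z)
  fun_prop

lemma AETransitive.ae_ae_ae [SFinite μ] (h : AETransitive μ R)
    (hR : Measurable (Function.uncurry R)) :
    ∀ᵐ y ∂μ, ∀ᵐ x ∂μ, ∀ᵐ z ∂μ, R x y → R y z → R x z := by
  have hprod : ∀ᵐ y ∂μ, ∀ᵐ q ∂μ.prod μ, R q.1 y → R y q.2 → R q.1 q.2 := by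
    refine (Measure.ae_ae_comm (p := fun (q : Ω × Ω) y => R q.1 y → R y q.2 → R q.1 q.2)
      (Measurable.setOf ?_)).1 (Eventually.of_forall fun q => h q.1 q.2)
    fun_prop
  exact hprod.mono fun y hy => Measure.ae_ae_of_ae_prod hy

lemma AETransitive.ae_pi [SigmaFinite μ] {κ : Type*} [Fintype κ] (h : AETransitive μ R)
    (hR : Measurable (Function.uncurry R)) :
    ∀ᵐ x ∂Measure.pi fun _ : κ => μ, ∀ i j l, j ≠ i → j ≠ l →
      R (x i) (x j) → R (x j) (x l) → R (x i) (x l) := by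
  classical
  simp only [ae_all_iff, eventually_imp_distrib_left]
  refine fun i j l hji hjl => ?_
  have hmeas (a b : κ) : Measurable fun x : κ → Ω => R (x a) (x b) := by
    fun_prop
  refine ae_pi_of_forall_ae_update
    ((hmeas i j).imp ((hmeas j l).imp (hmeas i l))) j fun x => ?_
  simpa only [Function.update_self, Function.update_of_ne hji.symm,
    Function.update_of_ne hjl.symm] using h (x i) (x l)

end AETransitive

section Reachability

/-- `HasWalk μ E n x y`: there are walks from `x` to `y` along `E` with `n` intermediate vertices,
where each intermediate vertex in turn ranges over a set of positive measure. For `E` the support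
of a kernel this is the support of the `(n + 1)`-st kernel power. -/
def HasWalk (μ : Measure Ω) (E : Ω → Ω → Prop) : ℕ → Ω → Ω → Prop
  | 0 => E
  | n + 1 => fun x y => ∃ᵐ z ∂μ, E x z ∧ HasWalk μ E n z y

/-- `Reachable μ E x y`: the vertex `y` is reached from `x` by a walk along `E` of some length, in
the almost-everywhere sense of `HasWalk`. -/
def Reachable (μ : Measure Ω) (E : Ω → Ω → Prop) (x y : Ω) : Prop := ∃ n, HasWalk μ E n x y

/-- The relation whose classes are the strong components up to null sets: `x` and `y` are each
reachable from the other. It need not be reflexive. -/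
def MutuallyReachable (μ : Measure Ω) (E : Ω → Ω → Prop) (x y : Ω) : Prop :=
  Reachable μ E x y ∧ Reachable μ E y x

variable {μ : Measure Ω} {E : Ω → Ω → Prop}

lemma MutuallyReachable.symm {x y : Ω} (h : MutuallyReachable μ E x y) :
    MutuallyReachable μ E y x :=
  And.symm h

variable [SFinite μ]

lemma measurable_hasWalk (hE : Measurable (Function.uncurry E)) (n : ℕ) :
    Measurable (Function.uncurry (HasWalk μ E n)) := by
  induction n with
  | zero => exact hE
  | succ n ih =>
    refine measurable_frequently_ae (p := fun (q : Ω × Ω) z => E q.1 z ∧ HasWalk μ E n z q.2) ?_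
    fun_prop

lemma measurable_reachable (hE : Measurable (Function.uncurry E)) :
    Measurable (Function.uncurry (Reachable μ E)) :=
  Measurable.exists fun n => measurable_hasWalk hE n

lemma measurable_mutuallyReachable (hE : Measurable (Function.uncurry E)) :
    Measurable (Function.uncurry (MutuallyReachable μ E)) :=
  (measurable_reachable hE).and ((measurable_reachable hE).comp measurable_swap)

lemma hasWalk_add_add_one_of_frequently (hE : Measurable (Function.uncurry E)) {m n : ℕ} {x y : Ω}
    (h : ∃ᵐ z ∂μ, HasWalk μ E m x z ∧ HasWalk μ E n z y) : HasWalk μ E (m + n + 1) x y := by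
  induction m generalizing x with
  | zero => rwa [Nat.zero_add]
  | succ m ih =>
    have hm := measurable_hasWalk (μ := μ) hE m
    have hn := measurable_hasWalk (μ := μ) hE n
    have hzw : ∃ᵐ z ∂μ, ∃ᵐ w ∂μ, E x w ∧ HasWalk μ E m w z ∧ HasWalk μ E n z y :=
      h.mono fun z hz => hz.1.mono fun w hw => ⟨hw.1, hw.2, hz.2⟩
    have hwz := (frequently_ae_frequently_ae_comm (by fun_prop)).1 hzw
    rw [Nat.succ_add]
    exact hwz.mono fun w hw =>
      ⟨(frequently_and_distrib_left.1 hw).1, ih (frequently_and_distrib_left.1 hw).2⟩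

lemma aeTransitive_reachable (hE : Measurable (Function.uncurry E)) :
    AETransitive μ (Reachable μ E) := by
  intro x z
  by_cases hxz : Reachable μ E x z
  · exact Eventually.of_forall fun _ _ _ => hxz
  · have hwalk (m n : ℕ) : ∀ᵐ y ∂μ, ¬(HasWalk μ E m x y ∧ HasWalk μ E n y z) :=
      not_frequently.1 fun h => hxz ⟨_, hasWalk_add_add_one_of_frequently hE h⟩
    filter_upwards [ae_all_iff.2 fun m => ae_all_iff.2 (hwalk m)] with y hy ⟨m, hm⟩ ⟨n, hn⟩
    exact absurd ⟨hm, hn⟩ (hy m n)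

lemma aeTransitive_mutuallyReachable (hE : Measurable (Function.uncurry E)) :
    AETransitive μ (MutuallyReachable μ E) :=
  (aeTransitive_reachable hE).and_swap

lemma ae_not_reachable_compl (hE : Measurable (Function.uncurry E)) {S : Set Ω}
    (hS : MeasurableSet S) (h : ∀ᵐ x ∂μ.restrict S, ∀ᵐ y ∂μ.restrict Sᶜ, ¬E x y) :
    ∀ᵐ x ∂μ.restrict S, ∀ᵐ y ∂μ.restrict Sᶜ, ¬Reachable μ E x y := by
  have hwalk (n : ℕ) : ∀ᵐ x ∂μ.restrict S, ∀ᵐ y ∂μ.restrict Sᶜ, ¬HasWalk μ E n x y := by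
    induction n with
    | zero => exact h
    | succ n ih =>
      have hn := measurable_hasWalk (μ := μ) hE n
      filter_upwards [h] with x hx
      refine (Measure.ae_ae_comm (p := fun z y => ¬(E x z ∧ HasWalk μ E n z y))
        (Measurable.setOf (by fun_prop))).1 ?_ |>.mono fun y hy => not_frequently.2 hy
      filter_upwards [(ae_restrict_iff' hS).1 ih, (ae_restrict_iff' hS.compl).1 hx] with z hzS hzSc
      by_cases hz : z ∈ S
      · exact (hzS hz).mono fun y hy h => hy h.2
      · exact Eventually.of_forall fun y h => hzSc hz h.1
  filter_upwards [ae_all_iff.2 hwalk] with x hx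
  filter_upwards [ae_all_iff.2 hx] with y hy ⟨n, hn⟩ using hy n hn

/-- If there were no edges from `A` to `B`, then no edge would leave the set of vertices outside `B`
that are reachable from `x`. But this set contains `A`, and `A` reaches `B` through `x`. -/
lemma frequently_edge_of_mutuallyReachable_class (hE : Measurable (Function.uncurry E)) {x : Ω}
    (hx : ∀ᵐ a ∂μ, ∀ᵐ b ∂μ, Reachable μ E a x → Reachable μ E x b → Reachable μ E a b)
    {A B : Set Ω} (hA : MeasurableSet A) (hB : MeasurableSet B)
    (hAB : A ∪ B = {y | MutuallyReachable μ E x y}) (hdisj : Disjoint A B)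
    (hμA : μ A ≠ 0) (hμB : μ B ≠ 0) :
    ∃ᵐ a ∂μ.restrict A, ∃ᵐ b ∂μ.restrict B, E a b := by
  intro hnot
  simp only [not_frequently, ae_restrict_iff' hA, ae_restrict_iff' hB] at hnot
  have hclass (y : Ω) : MutuallyReachable μ E x y ↔ y ∈ A ∨ y ∈ B := (Set.ext_iff.1 hAB y).symm
  have htrans := aeTransitive_reachable (μ := μ) hE
  have hR := measurable_reachable (μ := μ) hE
  set S : Set Ω := {y | Reachable μ E x y} \ B
  have hS : MeasurableSet S := (Measurable.setOf (by fun_prop)).diff hB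
  have hAS : A ⊆ S := fun a ha => ⟨((hclass a).2 (.inl ha)).1, disjoint_left.1 hdisj ha⟩
  have hBS : B ⊆ Sᶜ := fun b hb hbS => hbS.2 hb
  have hclosed : ∀ᵐ s ∂μ.restrict S, ∀ᵐ z ∂μ.restrict Sᶜ, ¬E s z := by
    simp only [ae_restrict_iff' hS, ae_restrict_iff' hS.compl]
    filter_upwards [hnot, htrans.ae_ae hR x] with s hsAB hxsz ⟨hxs, hsB⟩
    filter_upwards [eventually_imp_distrib_left.2 hsAB, hxsz, htrans s x]
      with z hAB hxz hszx hzS hsz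
    have hzB : z ∈ B := by_contra fun hzB => hzS ⟨hxz hxs ⟨0, hsz⟩, hzB⟩
    have hsx : Reachable μ E s x := hszx ⟨0, hsz⟩ ((hclass z).2 (.inr hzB)).2
    exact hAB (((hclass s).1 ⟨hxs, hsx⟩).resolve_right hsB) hzB hsz
  have hunreach := ae_not_reachable_compl hE hS hclosed
  simp only [ae_restrict_iff' hS, ae_restrict_iff' hS.compl] at hunreach
  refine hμA (measure_eq_zero_iff_ae_notMem.2 ?_)
  filter_upwards [hunreach, hx] with a hSa hax ha
  refine hμB (measure_eq_zero_iff_ae_notMem.2 ?_)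
  filter_upwards [hSa (hAS ha), hax] with b hSb hab hb
  exact hSb (hBS hb) (hab ((hclass a).2 (.inl ha)).2 ((hclass b).2 (.inr hb)).1)

end Reachability

section StrongComponents

variable {μ : Measure Ω} {Γ : Ω → Ω → ℝ}

lemma IsDigraphon.measurable_ne_zero (hΓ : IsDigraphon Γ) :
    Measurable (Function.uncurry fun x y => Γ x y ≠ 0) :=
  measurableSet_setOfPred.1 (hΓ.1 (measurableSet_singleton 0).compl)

lemma IsDigraphon.integrable_uncurry (hΓ : IsDigraphon Γ) (ν : Measure (Ω × Ω))
    [IsFiniteMeasure ν] : Integrable (Function.uncurry Γ) ν :=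
  .of_mem_Icc 0 1 hΓ.1.aemeasurable (Eventually.of_forall fun q => hΓ.2 q.1 q.2)

lemma StronglyConnectedIn.congr_ae {X Y : Set Ω} (hX : StronglyConnectedIn μ Γ X)
    (hY : MeasurableSet Y) (hXY : X =ᵐ[μ] Y) : StronglyConnectedIn μ Γ Y := by
  refine ⟨hY, measure_congr hXY ▸ hX.2.1, fun A B hA _ hAB hdisj hμA hμB => ?_⟩
  have hBY : Y \ A = B := hAB ▸ hdisj.sup_sdiff_cancel_left
  have hXA : (X ∩ A : Set Ω) =ᵐ[μ] A := by
    simpa [inter_eq_right.2 (hAB ▸ subset_union_left : A ⊆ Y)] using hXY.inter (ae_eq_refl A)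
  have hXB : (X \ A : Set Ω) =ᵐ[μ] B := hBY ▸ hXY.diff (ae_eq_refl A)
  have hpos := hX.2.2 (X ∩ A) (X \ A) (hX.1.inter hA) (hX.1.diff hA) (inter_union_sdiff X A)
    disjoint_sdiff_inter.symm (measure_congr hXA ▸ hμA) (measure_congr hXB ▸ hμB)
  simpa only [setIntegral_congr_set hXA, setIntegral_congr_set hXB] using hpos

lemma Fragmented.mono {X Y : Set Ω} (hY : Fragmented μ Γ Y) (hXY : X ⊆ Y) : Fragmented μ Γ X :=
  fun Z hZ => hY Z (hZ.trans hXY)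

lemma fragmented_of_measure_eq_zero {X : Set Ω} (hX : μ X = 0) : Fragmented μ Γ X :=
  fun _ hY _ hYconn => hYconn.2.1.ne' (measure_mono_null hY hX)

lemma ae_stronglyConnectedIn_mutuallyReachable_class [IsFiniteMeasure μ] (hΓ : IsDigraphon Γ) :
    ∀ᵐ x ∂μ, μ {y | MutuallyReachable μ (fun a b => Γ a b ≠ 0) x y} ≠ 0 →
      StronglyConnectedIn μ Γ {y | MutuallyReachable μ (fun a b => Γ a b ≠ 0) x y} := by
  have hE := hΓ.measurable_ne_zero
  have hM := measurable_mutuallyReachable (μ := μ) hE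
  filter_upwards [(aeTransitive_reachable hE).ae_ae_ae (measurable_reachable hE)] with x hx hpos
  refine ⟨Measurable.setOf (by fun_prop), pos_iff_ne_zero.2 hpos,
    fun A B hA hB hAB hdisj hμA hμB => ?_⟩
  exact integral_integral_pos_of_frequently_ne_zero (fun a b => (hΓ.2 a b).1)
    (hΓ.integrable_uncurry _)
    (frequently_edge_of_mutuallyReachable_class hE hx hA hB hAB hdisj hμA.ne' hμB.ne')

/-- A family of strong components of `Γ` together with the fragmented set left over by it. -/
structure IsStrongDecomposition {ι : Type*} (μ : Measure Ω) (Γ : Ω → Ω → ℝ) (X : ι → Set Ω) :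
    Prop where
  strongComponent : ∀ i, StrongComponent μ Γ (X i)
  pairwise_disjoint : Pairwise (Function.onFun Disjoint X)
  fragmented_compl : Fragmented μ Γ (⋃ i, X i)ᶜ

namespace IsStrongDecomposition

variable {ι : Type*} {X : ι → Set Ω}

lemma measurableSet (hX : IsStrongDecomposition μ Γ X) (i : ι) : MeasurableSet (X i) :=
  (hX.strongComponent i).1.1

lemma countable [SFinite μ] (hX : IsStrongDecomposition μ Γ X) : Countable ι := by
  have hpos := Measure.countable_meas_pos_of_disjoint_iUnion (μ := μ) hX.measurableSet
    hX.pairwise_disjoint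
  have huniv : {i | 0 < μ (X i)} = univ :=
    eq_univ_of_forall fun i => (hX.strongComponent i).1.2.1
  rwa [huniv, countable_univ_iff] at hpos

lemma eq_of_mem_of_mem (hX : IsStrongDecomposition μ Γ X) {i j : ι} {x : Ω} (hi : x ∈ X i)
    (hj : x ∈ X j) : i = j :=
  by_contra fun hij => disjoint_left.1 (hX.pairwise_disjoint hij) hi hj

lemma exists_ae_mem_of_stronglyConnectedIn [Countable ι] (hX : IsStrongDecomposition μ Γ X)
    {Y : Set Ω} (hY : StronglyConnectedIn μ Γ Y) : ∃ i, ∀ᵐ y ∂μ, y ∈ Y → y ∈ X i := by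
  by_cases hmeet : ∃ i, μ (X i ∩ Y) ≠ 0
  · obtain ⟨i, hi⟩ := hmeet
    have hdiff : μ (Y \ X i) = 0 := by_contra fun hne =>
      (hX.strongComponent i).2 Y hY.1 (pos_iff_ne_zero.2 hi) (pos_iff_ne_zero.2 hne) hY
    exact ⟨i, ae_le_set.2 hdiff⟩
  · push Not at hmeet
    have hnull : μ ((⋃ i, X i) ∩ Y) = 0 := by
      rw [iUnion_inter]
      exact measure_iUnion_null hmeet
    have hrest : Y =ᵐ[μ] (Y \ ⋃ i, X i : Set Ω) :=
      (sdiff_ae_eq_self.2 (inter_comm _ Y ▸ hnull)).symm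
    have hmeas : MeasurableSet (Y \ ⋃ i, X i) := hY.1.diff (.iUnion hX.measurableSet)
    exact absurd (hY.congr_ae hmeas hrest) (hX.fragmented_compl _ (fun y hy => hy.2) hmeas)

lemma ae_ae_exists_mem_and_mem [IsFiniteMeasure μ] (hΓ : IsDigraphon Γ)
    (hX : IsStrongDecomposition μ Γ X) :
    ∀ᵐ x ∂μ, ∀ᵐ y ∂μ, MutuallyReachable μ (fun a b => Γ a b ≠ 0) x y →
      ∃ i, x ∈ X i ∧ y ∈ X i := by
  have := hX.countable
  have hmem (i : ι) : Measurable (· ∈ X i) := measurable_mem.2 (hX.measurableSet i)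
  have hE := hΓ.measurable_ne_zero
  have htrans := aeTransitive_mutuallyReachable (μ := μ) hE
  have hM := measurable_mutuallyReachable (μ := μ) hE
  set M := MutuallyReachable μ fun a b => Γ a b ≠ 0
  have hclass : ∀ᵐ w ∂μ, ∀ᵐ q ∂μ.prod μ, M w q.1 → M w q.2 → ∃ i, q.1 ∈ X i ∧ q.2 ∈ X i := by
    filter_upwards [ae_stronglyConnectedIn_mutuallyReachable_class (μ := μ) hΓ] with w hw
    by_cases hnull : μ {y | M w y} = 0
    · have hout : ∀ᵐ x ∂μ, ¬M w x := measure_eq_zero_iff_ae_notMem.1 hnull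
      filter_upwards [Measure.quasiMeasurePreserving_fst.ae hout] with q hq h using absurd h hq
    · obtain ⟨i, hi⟩ := hX.exists_ae_mem_of_stronglyConnectedIn (hw hnull)
      filter_upwards [Measure.quasiMeasurePreserving_fst.ae hi,
        Measure.quasiMeasurePreserving_snd.ae hi] with q hq₁ hq₂ h₁ h₂ using ⟨i, hq₁ h₁, hq₂ h₂⟩
  have hmidpoint : ∀ᵐ x ∂μ, ∀ᵐ y ∂μ, ∀ᵐ w ∂μ, M w x → M w y → ∃ i, x ∈ X i ∧ y ∈ X i :=
    Measure.ae_ae_of_ae_prod <| (Measure.ae_ae_comm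
      (p := fun w (q : Ω × Ω) => M w q.1 → M w q.2 → ∃ i, q.1 ∈ X i ∧ q.2 ∈ X i)
      (Measurable.setOf (by fun_prop))).1 hclass
  filter_upwards [hmidpoint, htrans.ae_ae_ae hM] with x hx hxtrans
  by_cases hfreq : ∃ᵐ w ∂μ, M x w
  · filter_upwards [hx, hxtrans] with y hy hytrans hxy
    obtain ⟨w, hxw, hmem_of_class, hyw⟩ := (hfreq.and_eventually (hy.and hytrans)).exists
    exact hmem_of_class hxw.symm (hyw hxy.symm hxw).symm
  · filter_upwards [not_frequently.1 hfreq] with y hy hxy using absurd hxy hy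

end IsStrongDecomposition

end StrongComponents

section Cycles

/-- Transitivity is restricted to midpoints `j` distinct from both ends because this is all that
transitivity at almost every midpoint gives for independently sampled vertices. -/
lemma forall_rel_of_isCycleOn_univ {κ : Type*} [Finite κ] [Nontrivial κ] {σ : Equiv.Perm κ}
    (hσ : σ.IsCycleOn univ) {S : κ → κ → Prop} (hstep : ∀ i, S i (σ i))
    (htrans : ∀ i j l, j ≠ i → j ≠ l → S i j → S j l → S i l) (i j : κ) : S i j := by
  have hpow (n : ℕ) : S i (σ ((σ ^ n) i)) := by
    induction n with
    | zero => exact hstep i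
    | succ n ih =>
      rw [pow_succ', Equiv.Perm.mul_apply]
      by_cases hi : σ ((σ ^ n) i) = i
      · simpa only [hi] using hstep i
      · exact htrans _ _ _ hi (hσ.apply_ne nontrivial_univ (mem_univ _)).symm ih (hstep _)
  obtain ⟨n, hn⟩ := hσ.exists_pow_eq' finite_univ (mem_univ i) (mem_univ (σ.symm j))
  simpa only [hn, Equiv.apply_symm_apply] using hpow n

lemma IsStrongDecomposition.ae_pi_exists_forall_mem {κ ι : Type*} [Fintype κ] [Nontrivial κ]
    {μ : Measure Ω} [IsFiniteMeasure μ] {Γ : Ω → Ω → ℝ} {X : ι → Set Ω} {σ : Equiv.Perm κ}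
    (hσ : σ.IsCycleOn univ) (hΓ : IsDigraphon Γ) (hX : IsStrongDecomposition μ Γ X) :
    ∀ᵐ x ∂Measure.pi fun _ : κ => μ,
      (∀ i, Γ (x i) (x (σ i)) ≠ 0) → ∃ c, ∀ i, x i ∈ X c := by
  have := hX.countable
  have hmem (c : ι) : Measurable (· ∈ X c) := measurable_mem.2 (hX.measurableSet c)
  have hE := hΓ.measurable_ne_zero
  have hM := measurable_mutuallyReachable (μ := μ) hE
  have hpairs : ∀ᵐ x ∂Measure.pi fun _ : κ => μ, ∀ i j, i ≠ j →
      MutuallyReachable μ (fun a b => Γ a b ≠ 0) (x i) (x j) → ∃ c, x i ∈ X c ∧ x j ∈ X c := by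
    simp only [ae_all_iff, eventually_imp_distrib_left (p := _ ≠ _)]
    refine fun i j hij => ae_pi_of_ae_ae (α := fun _ => Ω) (p := fun u v =>
      MutuallyReachable μ (fun a b => Γ a b ≠ 0) u v → ∃ c, u ∈ X c ∧ v ∈ X c) hij ?_
      (hX.ae_ae_exists_mem_and_mem hΓ)
    fun_prop
  filter_upwards [(aeTransitive_reachable hE).ae_pi (measurable_reachable hE), hpairs]
    with x htrans hsame hcycle
  have hreach (i j : κ) : Reachable μ (fun a b => Γ a b ≠ 0) (x i) (x j) :=
    forall_rel_of_isCycleOn_univ (S := fun i j => Reachable μ (fun a b => Γ a b ≠ 0) (x i) (x j)) hσ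
      (fun i => ⟨0, hcycle i⟩) htrans i j
  obtain ⟨i, i', hii'⟩ := exists_pair_ne κ
  obtain ⟨c, hic, -⟩ := hsame i i' hii' ⟨hreach i i', hreach i' i⟩
  refine ⟨c, fun j => ?_⟩
  rcases eq_or_ne i j with rfl | hij
  · exact hic
  · obtain ⟨c', hic', hjc'⟩ := hsame i j hij ⟨hreach i j, hreach j i⟩
    exact hX.eq_of_mem_of_mem hic' hic ▸ hjc'

end Cycles

section CycleDensity

variable {μ : Measure Ω} {Γ : Ω → Ω → ℝ}

lemma cycleDensity_kerRestrict {A : Set Ω} (hA : MeasurableSet A) (k : ℕ) :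
    cycleDensity μ (kerRestrict Γ A) k =
      ∫ x in univ.pi fun _ => A, ∏ i : Fin k, Γ (x i) (x (finRotate k i))
        ∂Measure.pi fun _ => μ := by
  rw [← integral_indicator (MeasurableSet.univ_pi fun _ => hA), cycleDensity]
  congr 1 with x
  by_cases hx : x ∈ univ.pi fun _ => A
  · have hmem (i : Fin k) : x i ∈ A := hx i (mem_univ i)
    rw [indicator_of_mem hx]
    exact Finset.prod_congr rfl fun i _ =>
      indicator_of_mem (mk_mem_prod (hmem i) (hmem (finRotate k i))) _
  · obtain ⟨i, hi⟩ : ∃ i, x i ∉ A := by simpa using hx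
    rw [indicator_of_notMem hx]
    exact Finset.prod_eq_zero (Finset.mem_univ i) (indicator_of_notMem (fun h => hi h.1) _)

lemma IsDigraphon.integrable_prod_cycle [IsFiniteMeasure μ] (hΓ : IsDigraphon Γ) {κ : Type*}
    [Fintype κ] (σ : κ → κ) :
    Integrable (fun x : κ → Ω => ∏ i, Γ (x i) (x (σ i))) (Measure.pi fun _ => μ) := by
  refine .of_mem_Icc 0 1 (Measurable.aemeasurable ?_) (Eventually.of_forall fun x => ?_)
  · have hΓmeas := hΓ.1
    fun_prop
  · exact ⟨Finset.prod_nonneg fun i _ => (hΓ.2 _ _).1,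
      Finset.prod_le_one (fun i _ => (hΓ.2 _ _).1) fun i _ => (hΓ.2 _ _).2⟩

lemma isCycleOn_univ_finRotate {k : ℕ} (hk : 2 ≤ k) : (finRotate k).IsCycleOn univ := by
  have hmoved : {i | finRotate k i ≠ i} = univ := eq_univ_of_forall fun i =>
    Equiv.Perm.mem_support.1 (support_finRotate_of_le hk ▸ Finset.mem_univ i)
  exact hmoved ▸ (isCycle_finRotate_of_le hk).isCycleOn

theorem cycles_confined_to_strong_components_general {ι : Type*} [IsFiniteMeasure μ]
    (hΓ : IsDigraphon Γ) {X : ι → Set Ω} (hX : IsStrongDecomposition μ Γ X) {k : ℕ} (hk : 2 ≤ k) :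
    HasSum (fun i => cycleDensity μ (kerRestrict Γ (X i)) k) (cycleDensity μ Γ k) := by
  have := hX.countable
  have : Nontrivial (Fin k) := Fin.nontrivial_iff_two_le.2 hk
  set P : ι → Set (Fin k → Ω) := fun c => univ.pi fun _ => X c
  have hPmeas (c : ι) : MeasurableSet (P c) := .univ_pi fun _ => hX.measurableSet c
  have hPdisj : Pairwise (Function.onFun Disjoint P) := fun c c' hcc' => disjoint_left.2
    fun x hx hx' => hcc' (hX.eq_of_mem_of_mem (hx ⟨0, by lia⟩ trivial) (hx' ⟨0, by lia⟩ trivial))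
  have hconfined : ∀ᵐ x ∂Measure.pi fun _ : Fin k => μ, x ∉ ⋃ c, P c →
      ∏ i, Γ (x i) (x (finRotate k i)) = 0 := by
    filter_upwards [hX.ae_pi_exists_forall_mem (isCycleOn_univ_finRotate hk) hΓ] with x hx hxP
    by_contra hprod
    obtain ⟨c, hc⟩ := hx fun i => Finset.prod_ne_zero_iff.1 hprod i (Finset.mem_univ i)
    exact hxP (mem_iUnion.2 ⟨c, fun i _ => hc i⟩)
  have hsum := hasSum_integral_iUnion hPmeas hPdisj
    (hΓ.integrable_prod_cycle (μ := μ) (finRotate k)).integrableOn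
  rw [setIntegral_eq_integral_of_ae_compl_eq_zero hconfined] at hsum
  simp only [cycleDensity_kerRestrict (hX.measurableSet _)]
  exact hsum

end CycleDensity

/-- Directed cycles are confined to strong components:
`t(C_k,Γ) = ∑_{i∈I} t(C_k, Γ⟦X_i⟧)` for every `k ≥ 2`. -/
theorem cycles_confined_to_strong_components
    {Ω : Type*} [MeasurableSpace Ω] (μ : Measure Ω) [IsProbabilityMeasure μ]
    (Γ : Ω → Ω → ℝ) (hΓ : IsDigraphon Γ)
    (I : Set ℕ) (hI : 0 ∉ I) (X : ℕ → Set Ω)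
    (hXmeas : ∀ i ∈ insert 0 I, MeasurableSet (X i))
    (hXdisj : (insert 0 I).PairwiseDisjoint X)
    (hXcover : (⋃ i ∈ insert 0 I, X i) = Set.univ)
    (hX0 : μ (X 0) = 0 ∨ Fragmented μ Γ (X 0))
    (hXcomp : ∀ i ∈ I, StrongComponent μ Γ (X i))
    (k : ℕ) (hk : 2 ≤ k) :
    cycleDensity μ Γ k = ∑' i : I, cycleDensity μ (kerRestrict Γ (X i)) k := by
  have hcover : X 0 ∪ ⋃ i : I, X i = univ := by rw [← hXcover, biUnion_insert, iUnion_coe_set]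
  have hX : IsStrongDecomposition μ Γ fun i : I => X i :=
    { strongComponent := fun i => hXcomp i i.2
      pairwise_disjoint := fun i j hij =>
        hXdisj (mem_insert_of_mem 0 i.2) (mem_insert_of_mem 0 j.2) (Subtype.coe_ne_coe.2 hij)
      fragmented_compl :=
        (hX0.elim fragmented_of_measure_eq_zero id).mono fun x hx =>
          (hcover ▸ mem_univ x : x ∈ X 0 ∪ ⋃ i : I, X i).resolve_right hx }
  exact (cycles_confined_to_strong_components_general hΓ hX hk).tsum_eq.symm

end Digraphon
end
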